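/- arXiv:1607.04130 — 2 statements merged into one kernel-verified Lean document; each statement's English description precedes it below -/
import Mathlib

section
/- For p > 2, the first positive eigenvalue of the p-Laplacian of the complete graph K_m on m ≥ 2 vertices equals (m - 2 + 2^{p-1})/(m - 1). -/
open Finset

/-- The valency (degree) of a vertex `u` in the multigraph with edge set `E`,
each edge `e` having endpoints `(ends e).1` and `(ends e).2`. -/
def graphVal {V E : Type} [Fintype E] [DecidableEq V] (ends : E → V × V) (u : V) : ℕ :=
  ∑ e : E, ((if (ends e).1 = u then 1 else 0) + (if (ends e).2 = u then 1 else 0))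

/-- The p-energy ‖dx‖_p^p = Σ_e |x(e_+) - x(e_-)|^p of a function on the vertices. -/
noncomputable def graphEnergy {V E : Type} [Fintype E] (p : ℝ) (ends : E → V × V)
    (x : V → ℝ) : ℝ :=
  ∑ e : E, |x (ends e).2 - x (ends e).1| ^ p

/-- inf_{c ∈ ℝ} Σ_u |x_u - c|^p · val(u). -/
noncomputable def graphDenom {V E : Type} [Fintype V] [Fintype E] [DecidableEq V]
    (p : ℝ) (ends : E → V × V) (x : V → ℝ) : ℝ :=
  sInf {t : ℝ | ∃ c : ℝ, t = ∑ u : V, |x u - c| ^ p * (graphVal ends u : ℝ)}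

/-- λ_{1,p}: the first positive eigenvalue of the graph p-Laplacian, via the
Rayleigh quotient characterisation: infimum over non-constant `x` of
energy/denominator. -/
noncomputable def lambda1 {V E : Type} [Fintype V] [Fintype E] [DecidableEq V]
    (p : ℝ) (ends : E → V × V) : ℝ :=
  sInf {r : ℝ | ∃ x : V → ℝ, (∃ u v : V, x u ≠ x v) ∧
    r = graphEnergy p ends x / graphDenom p ends x}

/-- Adjacency relation of the multigraph. -/
def graphAdj {V E : Type} (ends : E → V × V) (u v : V) : Prop :=
  ∃ e : E, ends e = (u, v) ∨ ends e = (v, u)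

/-- Connectivity of the multigraph. -/
def graphConnected {V E : Type} (ends : E → V × V) : Prop :=
  ∀ u v : V, Relation.ReflTransGen (graphAdj ends) u v

/-!
On a complete graph the Rayleigh quotient attains its minimum, by compactness, at a balanced
function `x`, that is, one with `∑ φ_p(x_i) = 0` where `φ_p(t) = |t|^{p-2} t`. Comparison with
perturbations of `x` gives the eigenvalue equation `∑_j φ_p(x_i - x_j) = μ φ_p(x_i)`. Add this
equation at a maximum `a` of `x`, weighted by `b^{p-2}`, to its negative at a minimum `-b`, weighted
by `a^{p-2}`. Convexity of `t ↦ t^{p-1}` shows that every other vertex contributes at least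
`a^{p-2} b^{p-2} (a + b)`, while AM-GM shows that the two extremal vertices together contribute at
least `2^{p-1}` times that amount. Since the right-hand sides add up to `μ` times that amount,
`μ ≥ m - 2 + 2^{p-1}`. Equality holds for the function with values `1, -1, 0, …, 0`.
-/

/-- The odd power function `φ_p(t) = |t|^{p-2} t`: up to the factor `p` the derivative of `|t|^p`,
it is the nonlinearity of the `p`-Laplacian. -/
noncomputable def phi (p t : ℝ) : ℝ := |t| ^ (p - 2) * t

section Phi

variable {p : ℝ}

@[simp] lemma phi_zero : phi p 0 = 0 := by simp [phi]

@[simp] lemma phi_neg (t : ℝ) : phi p (-t) = -phi p t := by simp [phi]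

lemma phi_sub_comm (a b : ℝ) : phi p (a - b) = -phi p (b - a) := by rw [← neg_sub, phi_neg]

lemma phi_mul (s t : ℝ) : phi p (s * t) = phi p s * phi p t := by
  unfold phi
  rw [abs_mul, Real.mul_rpow (abs_nonneg s) (abs_nonneg t)]
  ring

lemma phi_pos_iff {t : ℝ} : 0 < phi p t ↔ 0 < t := by
  refine ⟨fun h => ?_, fun h => by unfold phi; positivity⟩
  by_contra! ht
  exact h.not_ge (mul_nonpos_of_nonneg_of_nonpos (by positivity) ht)

lemma phi_nonneg {t : ℝ} (ht : 0 ≤ t) : 0 ≤ phi p t := by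
  unfold phi; positivity

lemma phi_ne_zero {t : ℝ} (ht : t ≠ 0) : phi p t ≠ 0 :=
  mul_ne_zero (Real.rpow_pos_of_pos (abs_pos.mpr ht) _).ne' ht

lemma phi_mul_self (hp : p ≠ 0) (t : ℝ) : phi p t * t = |t| ^ p := by
  rcases eq_or_ne t 0 with rfl | ht
  · simp [Real.zero_rpow hp]
  · rw [phi, mul_assoc, ← abs_mul_abs_self t, ← sq, ← Real.rpow_natCast |t| 2,
      ← Real.rpow_add (abs_pos.mpr ht)]
    norm_num

lemma phi_of_pos {t : ℝ} (ht : 0 < t) : phi p t = t ^ (p - 1) := by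
  rw [phi, abs_of_pos ht, ← Real.rpow_add_one ht.ne']
  ring_nf

lemma phi_of_nonneg (hp : p ≠ 1) {t : ℝ} (ht : 0 ≤ t) : phi p t = t ^ (p - 1) := by
  rcases ht.eq_or_lt with rfl | ht
  · rw [phi_zero, Real.zero_rpow (sub_ne_zero.mpr hp)]
  · exact phi_of_pos ht

lemma hasDerivAt_abs_rpow_phi (hp : 1 < p) (t : ℝ) :
    HasDerivAt (fun t : ℝ => |t| ^ p) (p * phi p t) t := by
  simpa only [phi, mul_assoc] using hasDerivAt_abs_rpow t hp

lemma continuous_phi (hp : 1 < p) : Continuous (phi p) := by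
  have hderiv : deriv (fun t : ℝ => ‖t‖ ^ p) = fun t => p * phi p t :=
    funext fun t => (hasDerivAt_abs_rpow_phi hp t).deriv
  have hcont := (contDiff_norm_rpow (E := ℝ) hp).continuous_deriv_one
  rw [hderiv] at hcont
  simpa [(zero_lt_one.trans hp).ne'] using hcont.div_const p

lemma abs_rpow_add_phi_mul_sub_le (hp : 1 ≤ p) (a b : ℝ) :
    |a| ^ p + p * phi p a * (b - a) ≤ |b| ^ p := by
  rcases eq_or_ne a 0 with rfl | ha
  · simp only [abs_zero, phi_zero, mul_zero, zero_mul, add_zero]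
    rw [Real.zero_rpow (by positivity)]
    positivity
  obtain ⟨s, rfl⟩ : ∃ s, b = a * (1 + s) := ⟨b / a - 1, by field_simp; ring⟩
  have bernoulli : 1 + p * s ≤ |1 + s| ^ p := by
    rcases le_total (-1) s with hs | hs
    · rw [abs_of_nonneg (by linarith)]
      exact one_add_mul_self_le_rpow_one_add hs hp
    · exact le_trans (by nlinarith) (by positivity : 0 ≤ |1 + s| ^ p)
  calc |a| ^ p + p * phi p a * (a * (1 + s) - a)
      = |a| ^ p + p * (phi p a * a) * s := by ring
    _ = |a| ^ p * (1 + p * s) := by rw [phi_mul_self (by positivity)]; ring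
    _ ≤ |a| ^ p * |1 + s| ^ p := by gcongr
    _ = |a * (1 + s)| ^ p := by rw [abs_mul, Real.mul_rpow (abs_nonneg _) (abs_nonneg _)]

end Phi

section TwoPoint

variable {q a b : ℝ}

lemma rpow_sub_one_mul_self (ha : a ≠ 0) : a ^ (q - 1) * a = a ^ q := by
  rw [Real.rpow_sub_one ha, div_mul_cancel₀ _ ha]

lemma rpow_sub_one_mul_mul_add_le (hq : 1 ≤ q) (ha : 0 < a) (hb : 0 < b) {t : ℝ}
    (hat : t ≤ a) (hbt : -b ≤ t) :
    a ^ (q - 1) * b ^ (q - 1) * (a + b) ≤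
      b ^ (q - 1) * (a - t) ^ q + a ^ (q - 1) * (t + b) ^ q := by
  have tangent {c s : ℝ} (hc : 0 < c) (hs : 0 ≤ s) :
      c ^ (q - 1) * c + q * c ^ (q - 1) * (s - c) ≤ s ^ q := by
    have h := abs_rpow_add_phi_mul_sub_le hq c s
    have hphi : phi q c = c ^ (q - 1) := phi_of_pos hc
    rwa [abs_of_pos hc, abs_of_nonneg hs, hphi, ← rpow_sub_one_mul_self hc.ne'] at h
  -- The weights `b ^ (q - 1)` and `a ^ (q - 1)` make the terms linear in `t` cancel.
  calc a ^ (q - 1) * b ^ (q - 1) * (a + b)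
      = b ^ (q - 1) * (a ^ (q - 1) * a + q * a ^ (q - 1) * (a - t - a)) +
          a ^ (q - 1) * (b ^ (q - 1) * b + q * b ^ (q - 1) * (t + b - b)) := by ring
    _ ≤ _ := by
      gcongr
      · exact tangent ha (by linarith)
      · exact tangent hb (by linarith)

lemma two_mul_two_rpow_mul_mul_rpow_le {r : ℝ} (hr : 0 ≤ r) (ha : 0 ≤ a) (hb : 0 ≤ b) :
    2 * 2 ^ r * (a ^ r * b ^ r) ≤ (a ^ r + b ^ r) * (a + b) ^ r := by
  obtain ⟨s, hs, rfl⟩ : ∃ s, 0 ≤ s ∧ s ^ 2 = a := ⟨√a, Real.sqrt_nonneg a, Real.sq_sqrt ha⟩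
  obtain ⟨t, ht, rfl⟩ : ∃ t, 0 ≤ t ∧ t ^ 2 = b := ⟨√b, Real.sqrt_nonneg b, Real.sq_sqrt hb⟩
  have sq_rpow {c : ℝ} (hc : 0 ≤ c) : (c ^ 2) ^ r = (c ^ r) ^ 2 := by
    rw [sq, sq, Real.mul_rpow hc hc]
  calc 2 * 2 ^ r * ((s ^ 2) ^ r * (t ^ 2) ^ r)
      = 2 * s ^ r * t ^ r * (2 * s * t) ^ r := by
        rw [sq_rpow hs, sq_rpow ht, Real.mul_rpow (by positivity) ht,
          Real.mul_rpow (by positivity) hs]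
        ring
    _ ≤ ((s ^ r) ^ 2 + (t ^ r) ^ 2) * (s ^ 2 + t ^ 2) ^ r := by
        gcongr <;> exact two_mul_le_add_sq _ _
    _ = ((s ^ 2) ^ r + (t ^ 2) ^ r) * (s ^ 2 + t ^ 2) ^ r := by rw [sq_rpow hs, sq_rpow ht]

lemma two_rpow_mul_rpow_sub_one_mul_add_le (hq : 1 ≤ q) (ha : 0 < a) (hb : 0 < b) :
    2 ^ q * (a ^ (q - 1) * b ^ (q - 1) * (a + b)) ≤
      (a ^ (q - 1) + b ^ (q - 1)) * (a + b) ^ q := by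
  calc 2 ^ q * (a ^ (q - 1) * b ^ (q - 1) * (a + b))
      = 2 * 2 ^ (q - 1) * (a ^ (q - 1) * b ^ (q - 1)) * (a + b) := by
        rw [← rpow_sub_one_mul_self (q := q) two_ne_zero]; ring
    _ ≤ (a ^ (q - 1) + b ^ (q - 1)) * (a + b) ^ (q - 1) * (a + b) := by
        have hq0 : 0 ≤ q - 1 := sub_nonneg.mpr hq
        exact mul_le_mul_of_nonneg_right (two_mul_two_rpow_mul_mul_rpow_le hq0 ha.le hb.le)
          (by positivity)
    _ = _ := by rw [mul_assoc, rpow_sub_one_mul_self (by positivity)]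

end TwoPoint

section PairSum

variable {V : Type*} [Fintype V]

lemma add_add_mul_le_sum {u v : V} (huv : u ≠ v) {f : V → ℝ} {K : ℝ}
    (hK : ∀ j, j ≠ u → j ≠ v → K ≤ f j) :
    f u + f v + ((Fintype.card V : ℝ) - 2) * K ≤ ∑ j, f j := by
  classical
  have hpair : ∑ j ∈ {u, v}, (f j - K) ≤ ∑ j, (f j - K) := by
    refine Finset.sum_le_sum_of_subset_of_nonneg (subset_univ _) fun j _ hj => ?_
    simp only [mem_insert, mem_singleton, not_or] at hj
    exact sub_nonneg.mpr (hK j hj.1 hj.2)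
  rw [sum_pair huv, sum_sub_distrib, sum_const, card_univ, nsmul_eq_mul] at hpair
  linarith

lemma sum_eq_add_add_mul {u v : V} (huv : u ≠ v) {f : V → ℝ} {K : ℝ}
    (hK : ∀ j, j ≠ u → j ≠ v → f j = K) :
    ∑ j, f j = f u + f v + ((Fintype.card V : ℝ) - 2) * K := by
  have hle := add_add_mul_le_sum huv (f := fun j => -f j)
    fun j hu hv => (neg_inj.mpr (hK j hu hv)).ge
  rw [sum_neg_distrib] at hle
  exact le_antisymm (by linarith) (add_add_mul_le_sum huv fun j hu hv => (hK j hu hv).ge)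

end PairSum

/-- A function `x` is `p`-balanced if `∑ φ_p(x_u) = 0`. For `p > 1` this says that `c = 0` minimises
`c ↦ ∑ |x_u - c|^p`. -/
def IsBalanced {V : Type*} [Fintype V] (p : ℝ) (x : V → ℝ) : Prop := ∑ u, phi p (x u) = 0

section Balanced

variable {V : Type*} [Fintype V] {p : ℝ} {x : V → ℝ}

lemma IsBalanced.neg (hx : IsBalanced p x) : IsBalanced p (-x) := by
  simpa [IsBalanced] using hx

lemma IsBalanced.const_mul (hx : IsBalanced p x) (s : ℝ) : IsBalanced p fun u => s * x u := by
  simp only [IsBalanced, phi_mul, ← mul_sum] at hx ⊢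
  rw [hx, mul_zero]

lemma IsBalanced.exists_pos (hx : IsBalanced p x) (hx0 : x ≠ 0) : ∃ u, 0 < x u := by
  obtain ⟨v, hv⟩ := Function.ne_iff.mp hx0
  obtain ⟨u, -, hu⟩ :=
    exists_pos_of_sum_zero_of_exists_nonzero _ hx ⟨v, mem_univ v, phi_ne_zero hv⟩
  exact ⟨u, phi_pos_iff.mp hu⟩

lemma exists_isBalanced_sub_const (hp : 1 < p) (x : V → ℝ) :
    ∃ c, IsBalanced p fun u => x u - c := by
  rcases isEmpty_or_nonempty V with _ | _
  · exact ⟨0, by simp [IsBalanced]⟩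
  obtain ⟨M, hM⟩ := Finite.exists_max x
  obtain ⟨n, hn⟩ := Finite.exists_min x
  have hcont : Continuous fun c => ∑ u, phi p (x u - c) :=
    continuous_finsetSum _ fun u _ => (continuous_phi hp).comp (continuous_const.sub continuous_id)
  have hmax : ∑ u, phi p (x u - x M) ≤ 0 := sum_nonpos fun u _ => by
    rw [phi_sub_comm, neg_nonpos]
    exact phi_nonneg (sub_nonneg.mpr (hM u))
  have hmin : 0 ≤ ∑ u, phi p (x u - x n) :=
    sum_nonneg fun u _ => phi_nonneg (sub_nonneg.mpr (hn u))
  obtain ⟨c, -, hc⟩ := intermediate_value_Icc' (hn M) hcont.continuousOn ⟨hmax, hmin⟩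
  exact ⟨c, hc⟩

lemma sum_abs_rpow_add_sum_phi_mul_sub_le (hp : 1 ≤ p) (x y : V → ℝ) :
    ∑ u, |x u| ^ p + p * ∑ u, phi p (x u) * (y u - x u) ≤ ∑ u, |y u| ^ p := by
  rw [mul_sum, ← sum_add_distrib]
  refine sum_le_sum fun u _ => ?_
  rw [← mul_assoc]
  exact abs_rpow_add_phi_mul_sub_le hp (x u) (y u)

lemma IsBalanced.sum_phi_mul_sub_const (hx : IsBalanced p x) (w : V → ℝ) (c : ℝ) :
    ∑ u, phi p (x u) * (w u - c) = ∑ u, phi p (x u) * w u := by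
  simp only [mul_sub, sum_sub_distrib, ← sum_mul]
  rw [hx, zero_mul, sub_zero]

lemma IsBalanced.sum_abs_rpow_le_sum_abs_sub_rpow (hp : 1 ≤ p) {c : ℝ}
    (hc : IsBalanced p fun u => x u - c) (d : ℝ) :
    ∑ u, |x u - c| ^ p ≤ ∑ u, |x u - d| ^ p := by
  have htangent := sum_abs_rpow_add_sum_phi_mul_sub_le hp (fun u => x u - c) fun u => x u - d
  simp only [sub_sub_sub_cancel_left, ← sum_mul] at htangent
  rwa [hc, zero_mul, mul_zero, add_zero] at htangent

lemma sum_abs_mul_rpow (s : ℝ) (x : V → ℝ) :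
    ∑ u, |s * x u| ^ p = |s| ^ p * ∑ u, |x u| ^ p := by
  simp only [abs_mul, Real.mul_rpow (abs_nonneg _) (abs_nonneg _), mul_sum]

lemma sum_abs_rpow_pos (hx : x ≠ 0) : 0 < ∑ u, |x u| ^ p := by
  obtain ⟨u, hu⟩ := Function.ne_iff.mp hx
  exact sum_pos' (fun _ _ => by positivity)
    ⟨u, mem_univ u, Real.rpow_pos_of_pos (abs_pos.mpr hu) _⟩

lemma exists_sum_abs_const_mul_rpow_eq_one (hp : p ≠ 0) (hx : x ≠ 0) :
    ∃ s : ℝ, ∑ u, |s * x u| ^ p = 1 := by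
  have hpos : 0 < ∑ u, |x u| ^ p := sum_abs_rpow_pos hx
  refine ⟨(∑ u, |x u| ^ p) ^ (-p⁻¹), ?_⟩
  rw [sum_abs_mul_rpow, abs_of_pos (by positivity), ← Real.rpow_mul hpos.le, neg_mul,
    inv_mul_cancel₀ hp, Real.rpow_neg_one, inv_mul_cancel₀ hpos.ne']

end Balanced

/-- Twice the `p`-energy of `x` on the complete graph with vertex set `V`: each edge is counted
in both directions. -/
noncomputable def pairEnergy {V : Type*} [Fintype V] (p : ℝ) (x : V → ℝ) : ℝ :=
  ∑ i, ∑ j, |x i - x j| ^ p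

section PairEnergy

variable {V : Type*} [Fintype V] {p : ℝ}

lemma pairEnergy_nonneg (x : V → ℝ) : 0 ≤ pairEnergy p x := by
  unfold pairEnergy; positivity

lemma pairEnergy_sub_const (x : V → ℝ) (c : ℝ) :
    pairEnergy p (fun u => x u - c) = pairEnergy p x := by
  simp only [pairEnergy, sub_sub_sub_cancel_right]

lemma pairEnergy_const_mul (s : ℝ) (x : V → ℝ) :
    pairEnergy p (fun u => s * x u) = |s| ^ p * pairEnergy p x := by
  simp only [pairEnergy, ← mul_sub, sum_abs_mul_rpow, mul_sum]

lemma continuous_pairEnergy (hp : 0 ≤ p) : Continuous (pairEnergy p : (V → ℝ) → ℝ) := by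
  unfold pairEnergy
  fun_prop (disch := exact fun _ => Or.inr hp)

lemma sum_sum_phi_sub_mul_sub (x w : V → ℝ) :
    ∑ i, ∑ j, phi p (x i - x j) * (w i - w j) = 2 * ∑ i, (∑ j, phi p (x i - x j)) * w i := by
  have hswap : ∑ i, ∑ j, phi p (x i - x j) * w j = -∑ i, ∑ j, phi p (x i - x j) * w i := by
    rw [sum_comm]
    simp only [← sum_neg_distrib, ← neg_mul, ← phi_sub_comm]
  simp only [mul_sub, sum_sub_distrib, hswap, sum_mul]
  ring

lemma hasDerivAt_pairEnergy_add_mul (hp : 1 < p) (x w : V → ℝ) :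
    HasDerivAt (fun s : ℝ => pairEnergy p fun u => x u + s * w u)
      (2 * p * ∑ i, (∑ j, phi p (x i - x j)) * w i) 0 := by
  have hline (u : V) : HasDerivAt (fun s : ℝ => x u + s * w u) (w u) 0 := by
    simpa using ((hasDerivAt_id (0 : ℝ)).mul_const (w u)).const_add (x u)
  have hpair (i j : V) : HasDerivAt (fun s : ℝ => |x i + s * w i - (x j + s * w j)| ^ p)
      (p * phi p (x i - x j) * (w i - w j)) 0 :=
    (hasDerivAt_abs_rpow_phi hp (x i - x j)).comp_of_eq 0 ((hline i).sub (hline j)) (by simp)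
  have hcoeff : ∑ i, ∑ j, p * phi p (x i - x j) * (w i - w j) =
      2 * p * ∑ i, (∑ j, phi p (x i - x j)) * w i := by
    simp only [mul_assoc, ← mul_sum, sum_sum_phi_sub_mul_sub]
    ring
  rw [← hcoeff]
  exact HasDerivAt.fun_sum fun i _ => HasDerivAt.fun_sum fun j _ => hpair i j

end PairEnergy

section Minimizer

variable {V : Type*} [Fintype V] {p : ℝ}

lemma isCompact_setOf_isBalanced (hp : 1 < p) :
    IsCompact {x : V → ℝ | ∑ u, |x u| ^ p = 1 ∧ IsBalanced p x} := by
  have hp0 : 0 < p := by positivity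
  have hnorm : Continuous fun x : V → ℝ => ∑ u, |x u| ^ p :=
    continuous_finsetSum _ fun u _ => (continuous_apply u).abs.rpow_const fun _ => Or.inr hp0.le
  have hbalance : Continuous fun x : V → ℝ => ∑ u, phi p (x u) :=
    continuous_finsetSum _ fun u _ => (continuous_phi hp).comp (continuous_apply u)
  refine (isCompact_Icc (a := fun _ => -1) (b := fun _ => 1)).of_isClosed_subset
    ((isClosed_eq hnorm continuous_const).inter (isClosed_eq hbalance continuous_const)) ?_
  rintro x ⟨hx, -⟩
  have habs (u : V) : |x u| ≤ 1 := by
    have hle : |x u| ^ p ≤ 1 :=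
      hx ▸ single_le_sum (f := fun u => |x u| ^ p) (fun _ _ => by positivity) (mem_univ u)
    exact le_of_not_gt fun h => hle.not_gt (Real.one_lt_rpow h hp0)
  exact ⟨fun u => (abs_le.mp (habs u)).1, fun u => (abs_le.mp (habs u)).2⟩

/-- A `p`-balanced function that is nonzero and minimises the Rayleigh quotient
`pairEnergy p x / ∑ |x_u|^p` among all nonzero `p`-balanced functions, with `K` its minimum. The
inequality is written without division so that it makes sense for the zero function. -/
structure IsRayleighMinimizer (p K : ℝ) (x : V → ℝ) : Prop where
  isBalanced : IsBalanced p x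
  ne_zero : x ≠ 0
  pairEnergy_eq : pairEnergy p x = K * ∑ u, |x u| ^ p
  mul_sum_le : ∀ z : V → ℝ, IsBalanced p z → K * ∑ u, |z u| ^ p ≤ pairEnergy p z

lemma IsRayleighMinimizer.nonneg {K : ℝ} {x : V → ℝ} (h : IsRayleighMinimizer p K x) : 0 ≤ K :=
  nonneg_of_mul_nonneg_left (h.pairEnergy_eq ▸ pairEnergy_nonneg x) (sum_abs_rpow_pos h.ne_zero)

lemma exists_isRayleighMinimizer (hp : 1 < p) {y : V → ℝ} (hy : IsBalanced p y) (hy0 : y ≠ 0) :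
    ∃ (K : ℝ) (x : V → ℝ), IsRayleighMinimizer p K x := by
  have hp0 : p ≠ 0 := by positivity
  obtain ⟨s, hs⟩ := exists_sum_abs_const_mul_rpow_eq_one hp0 hy0
  obtain ⟨x, ⟨hx1, hx⟩, hmin⟩ := (isCompact_setOf_isBalanced hp).exists_isMinOn
    ⟨_, hs, hy.const_mul s⟩ (continuous_pairEnergy (by positivity)).continuousOn
  refine ⟨pairEnergy p x, x, hx, ?_, by rw [hx1, mul_one], fun z hz => ?_⟩
  · rintro rfl
    simp [Real.zero_rpow hp0] at hx1
  rcases eq_or_ne z 0 with rfl | hz0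
  · simpa [Real.zero_rpow hp0] using pairEnergy_nonneg (p := p) (0 : V → ℝ)
  obtain ⟨t, ht⟩ := exists_sum_abs_const_mul_rpow_eq_one hp0 hz0
  have hle : pairEnergy p x ≤ |t| ^ p * pairEnergy p z :=
    pairEnergy_const_mul t z ▸ hmin ⟨ht, hz.const_mul t⟩
  rw [sum_abs_mul_rpow] at ht
  calc pairEnergy p x * ∑ u, |z u| ^ p
      ≤ |t| ^ p * pairEnergy p z * ∑ u, |z u| ^ p := by gcongr
    _ = (|t| ^ p * ∑ u, |z u| ^ p) * pairEnergy p z := by ring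
    _ = pairEnergy p z := by rw [ht, one_mul]

/-- Convexity of `|t|^p` bounds the `p`-th power sum of every translate of a perturbation
`x + s w` of a balanced `x` from below by its linearisation, so the balancing constraint needs no
Lagrange multiplier. -/
lemma IsRayleighMinimizer.mul_linearization_le (hp : 1 < p) {K : ℝ} {x : V → ℝ}
    (h : IsRayleighMinimizer p K x) (w : V → ℝ) (s : ℝ) :
    K * (∑ u, |x u| ^ p + s * (p * ∑ u, phi p (x u) * w u)) ≤
      pairEnergy p fun u => x u + s * w u := by
  obtain ⟨c, hc⟩ := exists_isBalanced_sub_const hp fun u => x u + s * w u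
  have htangent := sum_abs_rpow_add_sum_phi_mul_sub_le hp.le x fun u => x u + s * w u - c
  have hlinear : ∑ u, phi p (x u) * (x u + s * w u - c - x u) = s * ∑ u, phi p (x u) * w u := by
    simp only [show ∀ u, x u + s * w u - c - x u = s * w u - c by intro u; ring,
      h.isBalanced.sum_phi_mul_sub_const, mul_sum, mul_left_comm s]
  rw [hlinear, mul_left_comm] at htangent
  calc _ ≤ K * ∑ u, |x u + s * w u - c| ^ p := mul_le_mul_of_nonneg_left htangent h.nonneg
    _ ≤ pairEnergy p fun u => x u + s * w u - c := h.mul_sum_le _ hc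
    _ = _ := pairEnergy_sub_const _ c

/-- The eigenvalue equation `Δ_p x = μ φ_p(x)` of the `p`-Laplacian
`(Δ_p x)_i = ∑_j φ_p(x_i - x_j)` of the complete graph on `V`, not normalised by the valency. -/
def IsEigenpair (p μ : ℝ) (x : V → ℝ) : Prop :=
  ∀ i, ∑ j, phi p (x i - x j) = μ * phi p (x i)

lemma IsRayleighMinimizer.isEigenpair (hp : 1 < p) {K : ℝ} {x : V → ℝ}
    (h : IsRayleighMinimizer p K x) : IsEigenpair p (K / 2) x := by
  classical
  intro i
  let w : V → ℝ := Pi.single i 1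
  let gap : ℝ → ℝ := fun s => (pairEnergy p fun u => x u + s * w u) -
    K * (∑ u, |x u| ^ p + s * (p * ∑ u, phi p (x u) * w u))
  have hgap_zero : gap 0 = 0 := by simp [gap, h.pairEnergy_eq]
  have hmin : IsLocalMin gap 0 := Filter.Eventually.of_forall fun s =>
    hgap_zero.trans_le (sub_nonneg.mpr (h.mul_linearization_le hp w s))
  have hderiv : HasDerivAt gap (2 * p * ∑ i, (∑ j, phi p (x i - x j)) * w i -
      K * (p * ∑ u, phi p (x u) * w u)) 0 :=
    (hasDerivAt_pairEnergy_add_mul hp x w).sub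
      (((hasDerivAt_mul_const _).const_add _).const_mul K)
  have hzero := hmin.hasDerivAt_eq_zero hderiv
  simp only [w, Pi.single_apply, mul_ite, mul_one, mul_zero, sum_ite_eq', mem_univ, if_true]
    at hzero
  refine mul_left_cancel₀ (by positivity : 2 * p ≠ 0) ?_
  linarith

lemma IsEigenpair.neg {μ : ℝ} {x : V → ℝ} (h : IsEigenpair p μ x) : IsEigenpair p μ (-x) := by
  intro i
  simp only [Pi.neg_apply, ← neg_sub', phi_neg, sum_neg_distrib, h i, mul_neg]

lemma IsEigenpair.sum_sub_rpow_eq (hp : p ≠ 1) {μ : ℝ} {x : V → ℝ} (h : IsEigenpair p μ x) {i : V}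
    (hi : ∀ j, x j ≤ x i) (hi0 : 0 ≤ x i) :
    ∑ j, (x i - x j) ^ (p - 1) = μ * x i ^ (p - 1) := by
  rw [← phi_of_nonneg hp hi0, ← h i]
  exact sum_congr rfl fun j _ => (phi_of_nonneg hp (sub_nonneg.mpr (hi j))).symm

lemma IsEigenpair.card_sub_two_add_two_rpow_le (hp : 2 ≤ p) {μ : ℝ} {x : V → ℝ}
    (h : IsEigenpair p μ x) (hx : IsBalanced p x) (hx0 : x ≠ 0) :
    (Fintype.card V : ℝ) - 2 + 2 ^ (p - 1) ≤ μ := by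
  obtain ⟨q, rfl⟩ : ∃ q, p = q + 1 := ⟨p - 1, by ring⟩
  have hq : 1 ≤ q := by linarith
  have hq1 : q + 1 ≠ 1 := by linarith
  obtain ⟨u, hu⟩ := hx.exists_pos hx0
  obtain ⟨v, hv⟩ := hx.neg.exists_pos (neg_ne_zero.mpr hx0)
  have : Nonempty V := ⟨u⟩
  obtain ⟨M, hM⟩ := Finite.exists_max x
  obtain ⟨n, hn⟩ := Finite.exists_max (-x)
  obtain ⟨a, haM⟩ : ∃ a, x M = a := ⟨_, rfl⟩
  obtain ⟨b, hbn⟩ : ∃ b, (-x) n = b := ⟨_, rfl⟩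
  have ha : 0 < a := haM ▸ hu.trans_le (hM u)
  have hb : 0 < b := hbn ▸ hv.trans_le (hn v)
  have hxn : x n = -b := by rw [← hbn, Pi.neg_apply, neg_neg]
  have hMn : M ≠ n := by rintro rfl; linarith
  have hmax : ∑ j, (a - x j) ^ q = μ * a ^ q := by
    simpa [haM] using h.sum_sub_rpow_eq hq1 hM (haM ▸ ha.le)
  have hmin : ∑ j, (x j + b) ^ q = μ * b ^ q := by
    simpa [hxn, add_comm b] using h.neg.sum_sub_rpow_eq hq1 hn (hbn ▸ hb.le)
  let f : V → ℝ := fun j => b ^ (q - 1) * (a - x j) ^ q + a ^ (q - 1) * (x j + b) ^ q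
  have hf_sum : ∑ j, f j = μ * (a ^ (q - 1) * b ^ (q - 1) * (a + b)) := by
    rw [sum_add_distrib, ← mul_sum, ← mul_sum, hmax, hmin, ← rpow_sub_one_mul_self (q := q) ha.ne',
      ← rpow_sub_one_mul_self (q := q) hb.ne']
    ring
  have hf_ends : f M + f n = (a ^ (q - 1) + b ^ (q - 1)) * (a + b) ^ q := by
    simp only [f, haM, hxn, sub_self, neg_add_cancel, sub_neg_eq_add,
      Real.zero_rpow (by positivity : q ≠ 0)]
    ring
  have hf_le : f M + f n + ((Fintype.card V : ℝ) - 2) *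
      (a ^ (q - 1) * b ^ (q - 1) * (a + b)) ≤ ∑ j, f j :=
    add_add_mul_le_sum hMn fun j _ _ => rpow_sub_one_mul_mul_add_le hq ha hb (haM ▸ hM j)
      (neg_le.mp (hbn ▸ hn j))
  have hends := two_rpow_mul_rpow_sub_one_mul_add_le hq ha hb
  rw [hf_sum, hf_ends] at hf_le
  rw [add_sub_cancel_right]
  refine le_of_mul_le_mul_right ?_ (by positivity : 0 < a ^ (q - 1) * b ^ (q - 1) * (a + b))
  linarith

end Minimizer

section Dipole

variable {V : Type*} [DecidableEq V] {u v : V}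

/-- The function with values `1` at `u`, `-1` at `v` and `0` elsewhere, for which the Rayleigh
quotient is minimal. -/
def dipole (u v : V) : V → ℝ := Pi.single u 1 - Pi.single v 1

lemma dipole_left (huv : u ≠ v) : dipole u v u = 1 := by simp [dipole, huv]

lemma dipole_right (huv : u ≠ v) : dipole u v v = -1 := by simp [dipole, huv.symm]

lemma dipole_of_ne {j : V} (hu : j ≠ u) (hv : j ≠ v) : dipole u v j = 0 := by
  simp [dipole, hu, hv]

variable [Fintype V] {p : ℝ}

lemma isBalanced_dipole (huv : u ≠ v) : IsBalanced p (dipole u v) := by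
  rw [IsBalanced, sum_eq_add_add_mul huv (K := 0) fun j hu hv => by simp [dipole_of_ne hu hv],
    dipole_left huv, dipole_right huv]
  simp

lemma sum_abs_dipole_rpow (hp : p ≠ 0) (huv : u ≠ v) : ∑ j, |dipole u v j| ^ p = 2 := by
  rw [sum_eq_add_add_mul huv (K := 0) fun j hu hv => by
    simp [dipole_of_ne hu hv, Real.zero_rpow hp], dipole_left huv, dipole_right huv]
  norm_num

lemma pairEnergy_dipole (hp : p ≠ 0) (huv : u ≠ v) :
    pairEnergy p (dipole u v) = 4 * ((Fintype.card V : ℝ) - 2 + 2 ^ (p - 1)) := by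
  have hzero : (0 : ℝ) ^ p = 0 := Real.zero_rpow hp
  have hleft : ∑ j, |dipole u v u - dipole u v j| ^ p = 2 ^ p + ((Fintype.card V : ℝ) - 2) := by
    rw [sum_eq_add_add_mul huv (K := 1) fun j hu hv => by
      simp [dipole_of_ne hu hv, dipole_left huv], dipole_left huv, dipole_right huv]
    norm_num [hzero]
  have hright : ∑ j, |dipole u v v - dipole u v j| ^ p = 2 ^ p + ((Fintype.card V : ℝ) - 2) := by
    rw [sum_eq_add_add_mul huv (K := 1) fun j hu hv => by
      simp [dipole_of_ne hu hv, dipole_right huv], dipole_left huv, dipole_right huv]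
    norm_num [hzero]
  have hrest (i : V) (hu : i ≠ u) (hv : i ≠ v) : ∑ j, |dipole u v i - dipole u v j| ^ p = 2 := by
    simp only [dipole_of_ne hu hv, zero_sub, abs_neg, sum_abs_dipole_rpow hp huv]
  have htwo : (2 : ℝ) ^ p = 2 ^ (p - 1) * 2 := by
    rw [← Real.rpow_add_one two_ne_zero, sub_add_cancel]
  rw [pairEnergy, sum_eq_add_add_mul huv hrest, hleft, hright, htwo]
  ring

end Dipole

lemma two_mul_sum_abs_rpow_le_pairEnergy {V : Type*} [Fintype V] {p : ℝ} (hp : 2 ≤ p) {x : V → ℝ}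
    (hx : IsBalanced p x) :
    2 * ((Fintype.card V : ℝ) - 2 + 2 ^ (p - 1)) * ∑ u, |x u| ^ p ≤ pairEnergy p x := by
  rcases eq_or_ne x 0 with rfl | hx0
  · simpa [Real.zero_rpow (by positivity : p ≠ 0)] using pairEnergy_nonneg (p := p) (0 : V → ℝ)
  have hp1 : 1 < p := by linarith
  obtain ⟨K, y, hy⟩ := exists_isRayleighMinimizer hp1 hx hx0
  have hK := (hy.isEigenpair hp1).card_sub_two_add_two_rpow_le hp hy.isBalanced hy.ne_zero
  calc _ ≤ K * ∑ u, |x u| ^ p := by gcongr; linarith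
    _ ≤ pairEnergy p x := hy.mul_sum_le x hx

lemma sum_lt_add_sum_diag {V M : Type*} [Fintype V] [LinearOrder V] [AddCommMonoid M]
    (f : V → V → M) :
    ∑ e : {e : V × V // e.1 < e.2}, (f e.val.1 e.val.2 + f e.val.2 e.val.1) + ∑ i, f i i =
      ∑ i, ∑ j, f i j := by
  have hlt (g : V → V → M) : ∑ e : {e : V × V // e.1 < e.2}, g e.val.1 e.val.2 =
      ∑ i, ∑ j, if i < j then g i j else 0 := by
    rw [← Fintype.sum_prod_type', ← sum_filter]
    exact (sum_subtype _ (by simp) fun z : V × V => g z.1 z.2).symm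
  have hdiag (i : V) : f i i = ∑ j, if i = j then f i j else 0 := by simp
  rw [sum_add_distrib, hlt f, hlt fun i j => f j i,
    sum_comm (f := fun i j => if i < j then f j i else 0)]
  simp only [hdiag, ← sum_add_distrib]
  refine sum_congr rfl fun i _ => sum_congr rfl fun j _ => ?_
  rcases lt_trichotomy i j with h | rfl | h
  · simp [h, h.not_gt, h.ne]
  · simp
  · simp [h, h.not_gt, h.ne']

section CompleteGraph

variable {V : Type} [Fintype V] [LinearOrder V] {p : ℝ}

/-- The complete graph on `V` as an edge set with end points: every edge is written as an increasing
pair of vertices. -/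
abbrev completeEnds (V : Type) [LinearOrder V] : {e : V × V // e.1 < e.2} → V × V := fun e => e.val

lemma graphVal_completeEnds (u : V) :
    (graphVal (completeEnds V) u : ℝ) = (Fintype.card V : ℝ) - 1 := by
  have hpairs := sum_lt_add_sum_diag fun i _ : V => if i = u then 1 else 0
  simp only [sum_ite_eq', mem_univ, if_true, sum_const, card_univ, smul_eq_mul,
    mul_ite, mul_one, mul_zero] at hpairs
  rw [eq_sub_iff_add_eq, graphVal]
  exact_mod_cast hpairs

lemma two_mul_graphEnergy_completeEnds (hp : p ≠ 0) (x : V → ℝ) :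
    2 * graphEnergy p (completeEnds V) x = pairEnergy p x := by
  have hpairs := sum_lt_add_sum_diag fun i j : V => |x i - x j| ^ p
  simp only [sub_self, abs_zero, Real.zero_rpow hp, sum_const_zero, add_zero] at hpairs
  rw [pairEnergy, ← hpairs, graphEnergy, mul_sum]
  exact sum_congr rfl fun e _ => by rw [two_mul, abs_sub_comm (x e.val.1)]

lemma graphDenom_completeEnds (hp : 1 ≤ p) {x : V → ℝ} {c : ℝ}
    (hc : IsBalanced p fun u => x u - c) :
    graphDenom p (completeEnds V) x = ((Fintype.card V : ℝ) - 1) * ∑ u, |x u - c| ^ p := by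
  rcases isEmpty_or_nonempty V with _ | _
  · simp [graphDenom]
  have hcard : 0 ≤ (Fintype.card V : ℝ) - 1 :=
    sub_nonneg.mpr (Nat.one_le_cast.mpr Fintype.card_pos)
  simp only [graphDenom, graphVal_completeEnds, ← sum_mul]
  rw [mul_comm]
  refine IsLeast.csInf_eq ⟨⟨c, rfl⟩, ?_⟩
  rintro t ⟨d, rfl⟩
  exact mul_le_mul_of_nonneg_right (hc.sum_abs_rpow_le_sum_abs_sub_rpow hp d) hcard

lemma rayleigh_completeEnds (hp : 1 ≤ p) {x : V → ℝ} {c : ℝ}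
    (hc : IsBalanced p fun u => x u - c) :
    graphEnergy p (completeEnds V) x / graphDenom p (completeEnds V) x =
      pairEnergy p x / (2 * ∑ u, |x u - c| ^ p) / ((Fintype.card V : ℝ) - 1) := by
  rw [graphDenom_completeEnds hp hc, ← two_mul_graphEnergy_completeEnds (by positivity),
    mul_div_mul_left _ _ two_ne_zero, div_div, mul_comm]

lemma rayleigh_completeEnds_dipole (hp : 1 ≤ p) {u v : V} (huv : u ≠ v) :
    graphEnergy p (completeEnds V) (dipole u v) / graphDenom p (completeEnds V) (dipole u v) =
      ((Fintype.card V : ℝ) - 2 + 2 ^ (p - 1)) / ((Fintype.card V : ℝ) - 1) := by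
  have hp0 : p ≠ 0 := by positivity
  rw [rayleigh_completeEnds (c := 0) hp (by simpa using isBalanced_dipole huv)]
  simp only [sub_zero, sum_abs_dipole_rpow hp0 huv, pairEnergy_dipole hp0 huv]
  ring

lemma le_rayleigh_completeEnds (hp : 2 ≤ p) {x : V → ℝ} (hx : ∃ u v, x u ≠ x v) :
    ((Fintype.card V : ℝ) - 2 + 2 ^ (p - 1)) / ((Fintype.card V : ℝ) - 1) ≤
      graphEnergy p (completeEnds V) x / graphDenom p (completeEnds V) x := by
  obtain ⟨u, v, huv⟩ := hx
  obtain ⟨c, hc⟩ := exists_isBalanced_sub_const (by linarith : 1 < p) x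
  have hne : (fun w => x w - c) ≠ 0 := fun h =>
    huv ((sub_eq_zero.mp (congrFun h u)).trans (sub_eq_zero.mp (congrFun h v)).symm)
  have hpos : 0 < ∑ w, |x w - c| ^ p := sum_abs_rpow_pos hne
  have hcard : 0 ≤ (Fintype.card V : ℝ) - 1 :=
    sub_nonneg.mpr (Nat.one_le_cast.mpr (Fintype.card_pos_iff.mpr ⟨u⟩))
  have hle := two_mul_sum_abs_rpow_le_pairEnergy hp hc
  rw [pairEnergy_sub_const] at hle
  rw [rayleigh_completeEnds (by linarith) hc]
  gcongr
  rw [le_div_iff₀ (by positivity)]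
  linarith

end CompleteGraph

theorem stmt5_general {V : Type} [Fintype V] [LinearOrder V] [Nontrivial V] (p : ℝ) (hp : 2 ≤ p) :
    lambda1 p (fun e : {e : V × V // e.1 < e.2} => e.val) =
      ((Fintype.card V : ℝ) - 2 + 2 ^ (p - 1)) / ((Fintype.card V : ℝ) - 1) := by
  obtain ⟨u, v, huv⟩ := exists_pair_ne V
  refine IsLeast.csInf_eq ⟨⟨dipole u v, ⟨u, v, ?_⟩, ?_⟩, ?_⟩
  · rw [dipole_left huv, dipole_right huv]
    norm_num
  · exact (rayleigh_completeEnds_dipole (by linarith) huv).symm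
  · rintro r ⟨x, hx, rfl⟩
    exact le_rayleigh_completeEnds hp hx

/-- Amghibech: for p > 2, λ_{1,p} of the complete graph K_m equals
(m - 2 + 2^{p-1})/(m - 1). -/
theorem stmt5 (m : ℕ) (hm : 2 ≤ m) (p : ℝ) (hp : 2 < p) :
    lambda1 p (fun e : {e : Fin m × Fin m // e.1 < e.2} => e.val) =
      ((m : ℝ) - 2 + 2 ^ (p - 1)) / ((m : ℝ) - 1) := by
  have : Nontrivial (Fin m) := Fin.nontrivial_iff_two_le.mpr hm
  simpa only [Fintype.card_fin] using stmt5_general (V := Fin m) p hp.le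
end

section
/- For p > 2 and integers k, M ≥ 2, the first positive eigenvalue of the p-Laplacian of the complete k-partite graph K_{k×M} with k parts of M vertices each satisfies 1 ≥ λ_{1,p}(K_{k×M}) ≥ (m - 2 + 2^{p-1})·k / (m·(k - 1 + 2^{p+2})), where m = kM. -/
open Finset

/-!
The upper bound comes from testing the Rayleigh quotient with the function `1` and `-1` at two
vertices of one part and `0` elsewhere: no edge sees both nonzero values, and `c = 0` is the best
constant.

For the lower bound write `S = ∑ u, ∑ v, |x u - x v| ^ p` over all pairs of the `m` vertices.

* Averaging `|x u - x v| ^ p ≤ 2 ^ (p - 1) * (|x u - x w| ^ p + |x v - x w| ^ p)`, for `u` and `v`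
  in one part, over the vertices `w` outside that part bounds the pairs inside parts by those
  across, so `S` is at most a multiple of the energy.
* The midrange `c` of `x` satisfies `2 ^ p * |x u - c| ^ p ≤ |x u - min x| ^ p + |x u - max x| ^ p`,
  and these are two terms of `S`.
* The mean `c` of `x` satisfies `2 * m * ∑ u, |x u - c| ^ p ≤ S`. With `a = x - c` and
  `φ = a * |a| ^ (p - 2)`, the left side is `∑ u, ∑ v, (a u - a v) * (φ u - φ v)`, so Young's
  inequality reduces the claim to `∑ u, ∑ v, |φ u - φ v| ^ q ≤ 2 * m * ∑ u, |φ u| ^ q` for the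
  conjugate exponent `q ≤ 2`. This holds because `|s| ^ q + |t| ^ q - |s - t| ^ q` dominates
  `f s * f t * min (|s| ^ (2 - q)) (|t| ^ (2 - q))` for a suitable weight `f`, and `min` is a
  positive semidefinite kernel.
-/

section PowerInequalities

lemma abs_sub_rpow_le_two_rpow_mul {p : ℝ} (hp : 1 ≤ p) (a b : ℝ) :
    |a - b| ^ p ≤ 2 ^ (p - 1) * (|a| ^ p + |b| ^ p) := calc
  |a - b| ^ p ≤ (|a| + |b|) ^ p := by
    have := abs_sub a b
    gcongr
  _ ≤ 2 ^ (p - 1) * (|a| ^ p + |b| ^ p) := by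
    exact_mod_cast NNReal.rpow_add_le_mul_rpow_add_rpow (Real.nnabs a) (Real.nnabs b) hp

lemma one_add_mul_le_abs_one_add_rpow {p : ℝ} (hp : 1 ≤ p) (t : ℝ) :
    1 + p * t ≤ |1 + t| ^ p := by
  rcases le_total (-1) t with ht | ht
  · rw [abs_of_nonneg (by linarith)]
    exact one_add_mul_self_le_rpow_one_add ht hp
  · have : 0 ≤ |1 + t| ^ p := by positivity
    nlinarith

lemma two_le_abs_one_sub_rpow_add_abs_neg_one_sub_rpow {p : ℝ} (hp : 1 ≤ p) (c : ℝ) :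
    2 ≤ |1 - c| ^ p + |-1 - c| ^ p := by
  have h₁ := one_add_mul_le_abs_one_add_rpow hp (-c)
  have h₂ := one_add_mul_le_abs_one_add_rpow hp c
  rw [← sub_eq_add_neg] at h₁
  rw [← abs_neg, neg_add'] at h₂
  linarith

lemma one_add_rpow_le {q t : ℝ} (hq₁ : 1 ≤ q) (hq₂ : q ≤ 2) (ht : -1 ≤ t) :
    (1 + t) ^ q ≤ 1 + |t| ^ q + q * t := by
  have rpow_eq {s : ℝ} (hs : 0 ≤ s) : s ^ q = s * s ^ (q - 1) := by
    rw [← Real.rpow_one_add' hs (by linarith)]; ring_nf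
  have bernoulli : (1 + t) ^ (q - 1) ≤ 1 + (q - 1) * t :=
    rpow_one_add_le_one_add_mul_self ht (by linarith) (by linarith)
  have subadd {a b : ℝ} (ha : 0 ≤ a) (hb : 0 ≤ b) :
      (a + b) ^ (q - 1) ≤ a ^ (q - 1) + b ^ (q - 1) := by
    lift a to NNReal using ha
    lift b to NNReal using hb
    exact_mod_cast NNReal.rpow_add_le_add_rpow a b (by linarith) (by linarith)
  have increment : t * (1 + t) ^ (q - 1) ≤ t + |t| * |t| ^ (q - 1) := by
    rcases le_total 0 t with h | h
    · have := subadd zero_le_one h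
      rw [Real.one_rpow] at this
      rw [abs_of_nonneg h]
      nlinarith
    · have := subadd (by linarith : 0 ≤ 1 + t) (neg_nonneg.2 h)
      rw [add_neg_cancel_right, Real.one_rpow] at this
      rw [abs_of_nonpos h]
      nlinarith
  rw [rpow_eq (by linarith : 0 ≤ 1 + t), rpow_eq (abs_nonneg t)]
  linarith

lemma abs_sub_rpow_le {q : ℝ} (hq₁ : 1 ≤ q) (hq₂ : q ≤ 2) (x y : ℝ) :
    |x - y| ^ q ≤ |x| ^ q + |y| ^ q -
      q * (x * |x| ^ (q - 2) * (y * |y| ^ (q - 2)) * min (|x| ^ (2 - q)) (|y| ^ (2 - q))) := by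
  wlog hxy : |y| ≤ |x| generalizing x y
  · have := this y x (le_of_not_ge hxy)
    rw [abs_sub_comm, min_comm]
    linarith
  rcases eq_or_ne x 0 with rfl | hx
  · obtain rfl : y = 0 := by simpa using hxy
    simp [Real.zero_rpow (by linarith : q ≠ 0)]
  have hx' : 0 < |x| := abs_pos.2 hx
  have hmin : min (|x| ^ (2 - q)) (|y| ^ (2 - q)) = |y| ^ (2 - q) :=
    min_eq_right (Real.rpow_le_rpow (abs_nonneg y) hxy (by linarith))
  have hy : y * |y| ^ (q - 2) * |y| ^ (2 - q) = y := by
    rcases eq_or_ne y 0 with rfl | hy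
    · simp
    · rw [mul_assoc, ← Real.rpow_add (abs_pos.2 hy)]; simp
  have hyx : -1 ≤ -(y / x) := by
    have : |y / x| ≤ 1 := by rw [abs_div]; exact div_le_one_of_le₀ hxy hx'.le
    linarith [le_abs_self (y / x)]
  have hpow : |x| ^ q * (y / x) = x * |x| ^ (q - 2) * y := by
    rw [Real.rpow_sub hx', Real.rpow_two, sq_abs]; field_simp
  calc |x - y| ^ q = |x| ^ q * (1 + -(y / x)) ^ q := by
        rw [← abs_of_nonneg (by linarith : 0 ≤ 1 + -(y / x)),
          ← Real.mul_rpow hx'.le (abs_nonneg _), ← abs_mul]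
        congr 2; field_simp; ring
    _ ≤ |x| ^ q * (1 + |-(y / x)| ^ q + q * -(y / x)) := by
        gcongr; exact one_add_rpow_le hq₁ hq₂ hyx
    _ = |x| ^ q + |y| ^ q - q * (|x| ^ q * (y / x)) := by
        rw [abs_neg, abs_div, Real.div_rpow (abs_nonneg y) hx'.le]; field_simp; ring
    _ = _ := by rw [hpow, hmin, mul_assoc (x * _), hy]

end PowerInequalities

section DoubleSums

variable {V : Type*} [Fintype V]

lemma sum_sum_mul_mul_min_nonneg (c : V → ℝ) {r : V → ℝ} (hr : ∀ u, 0 ≤ r u) :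
    0 ≤ ∑ u, ∑ v, c u * c v * min (r u) (r v) := by
  have hmin (u v : V) : MeasureTheory.volume.real (Set.Ioc 0 (r u) ∩ Set.Ioc 0 (r v)) =
      min (r u) (r v) := by
    simp [Set.Ioc_inter_Ioc, hr]
  have hpsd := MeasureTheory.posSemidef_matrix_measure_inter (μ := MeasureTheory.volume)
    (fun u => measurableSet_Ioc) (fun u => (measure_Ioc_lt_top (a := 0) (b := r u)).ne)
  have := hpsd.dotProduct_mulVec_nonneg c
  simpa [dotProduct, Matrix.mulVec, hmin, mul_sum, mul_assoc, mul_left_comm, mul_comm] using this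

theorem sum_sum_abs_sub_rpow_le {q : ℝ} (hq₁ : 1 ≤ q) (hq₂ : q ≤ 2) (x : V → ℝ) :
    ∑ u, ∑ v, |x u - x v| ^ q ≤ 2 * Fintype.card V * ∑ u, |x u| ^ q := by
  have hker := sum_sum_mul_mul_min_nonneg (fun u => x u * |x u| ^ (q - 2))
    (r := fun u => |x u| ^ (2 - q)) (fun u => by positivity)
  refine (sum_le_sum fun u _ => sum_le_sum fun v _ =>
    abs_sub_rpow_le hq₁ hq₂ (x u) (x v)).trans ?_
  simp only [sum_sub_distrib, sum_add_distrib, ← mul_sum, sum_const, card_univ, nsmul_eq_mul]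
  nlinarith

theorem card_mul_sum_abs_rpow_le {p : ℝ} (hp : 2 ≤ p) {a : V → ℝ} (ha : ∑ u, a u = 0) :
    2 * Fintype.card V * ∑ u, |a u| ^ p ≤ ∑ u, ∑ v, |a u - a v| ^ p := by
  obtain ⟨q, hpq⟩ : ∃ q, p.HolderConjugate q :=
    ⟨_, Real.HolderConjugate.conjExponent (by linarith)⟩
  have hq₁ : 1 ≤ q := hpq.symm.lt.le
  have hq₂ : q ≤ 2 := by nlinarith [hpq.mul_eq_add]
  let φ (u : V) : ℝ := a u * |a u| ^ (p - 2)
  have hφ_mul (u : V) : a u * φ u = |a u| ^ p := by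
    rw [← mul_assoc, ← abs_mul_abs_self, mul_assoc,
      ← Real.rpow_one_add' (abs_nonneg _) (by linarith),
      ← Real.rpow_one_add' (abs_nonneg _) (by linarith)]
    ring_nf
  have hφ_rpow (u : V) : |φ u| ^ q = |a u| ^ p := by
    rw [abs_mul, Real.abs_rpow_of_nonneg (abs_nonneg _), abs_abs,
      ← Real.rpow_one_add' (abs_nonneg _) (by linarith), ← Real.rpow_mul (abs_nonneg _)]
    congr 1
    linarith [hpq.mul_eq_add]
  have hdual : ∑ u, ∑ v, (a u - a v) * (φ u - φ v) = 2 * Fintype.card V * ∑ u, |a u| ^ p := by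
    simp only [sub_mul, mul_sub, hφ_mul, sum_sub_distrib, sum_const, card_univ, nsmul_eq_mul,
      ← mul_sum, ← sum_mul, ha]
    ring
  have hyoung : ∑ u, ∑ v, (a u - a v) * (φ u - φ v) ≤
      (∑ u, ∑ v, |a u - a v| ^ p) / p + (∑ u, ∑ v, |φ u - φ v| ^ q) / q := by
    simp only [sum_div, ← sum_add_distrib]
    exact sum_le_sum fun u _ => sum_le_sum fun v _ => Real.young_inequality _ _ hpq
  have hφ : ∑ u, ∑ v, |φ u - φ v| ^ q ≤ 2 * Fintype.card V * ∑ u, |a u| ^ p := by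
    simpa only [hφ_rpow] using sum_sum_abs_sub_rpow_le hq₁ hq₂ φ
  have hdiv := div_le_div_of_nonneg_right hφ hpq.symm.nonneg
  have hsplit (t : ℝ) : t = t / p + t / q := by
    rw [div_eq_mul_inv, div_eq_mul_inv, ← mul_add, hpq.inv_add_inv_eq_one, mul_one]
  rw [hdual] at hyoung
  refine (div_le_div_iff_of_pos_right hpq.pos).1 ?_
  linarith [hsplit (2 * Fintype.card V * ∑ u, |a u| ^ p)]

lemma exists_card_mul_sum_abs_sub_rpow_le {p : ℝ} (hp : 2 ≤ p) (x : V → ℝ) :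
    ∃ c, 2 * Fintype.card V * ∑ u, |x u - c| ^ p ≤ ∑ u, ∑ v, |x u - x v| ^ p := by
  cases isEmpty_or_nonempty V
  · simp
  let c := (∑ u, x u) / Fintype.card V
  have hsum : ∑ u, (x u - c) = 0 := by
    simp [c, mul_div_cancel₀]
  refine ⟨c, ?_⟩
  simpa only [sub_sub_sub_cancel_right] using card_mul_sum_abs_rpow_le hp hsum

lemma two_rpow_mul_abs_sub_midpoint_rpow_le {p a b t : ℝ} (hp : 0 ≤ p)
    (hat : a ≤ t) (htb : t ≤ b) :
    2 ^ p * |t - (a + b) / 2| ^ p ≤ |t - a| ^ p + |t - b| ^ p := by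
  have hmax : 2 * |t - (a + b) / 2| ≤ max |t - a| |t - b| := by
    grind
  rw [← Real.mul_rpow zero_le_two (abs_nonneg _)]
  calc (2 * |t - (a + b) / 2|) ^ p ≤ max |t - a| |t - b| ^ p := by gcongr
    _ = max (|t - a| ^ p) (|t - b| ^ p) :=
      (Real.monotoneOn_rpow_Ici_of_exponent_nonneg hp).map_max (Set.mem_Ici.2 (abs_nonneg _))
        (Set.mem_Ici.2 (abs_nonneg _))
    _ ≤ |t - a| ^ p + |t - b| ^ p := max_le_add_of_nonneg (by positivity) (by positivity)

lemma exists_two_rpow_mul_sum_abs_sub_rpow_le {p : ℝ} (hp : 0 < p) (x : V → ℝ) :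
    ∃ c, 2 ^ p * ∑ u, |x u - c| ^ p ≤ ∑ u, ∑ v, |x u - x v| ^ p := by
  classical
  cases isEmpty_or_nonempty V
  · simp
  obtain ⟨i, hi⟩ := Finite.exists_min x
  obtain ⟨j, hj⟩ := Finite.exists_max x
  refine ⟨(x i + x j) / 2, ?_⟩
  rw [mul_sum]
  refine sum_le_sum fun u _ =>
    (two_rpow_mul_abs_sub_midpoint_rpow_le hp.le (hi u) (hj u)).trans ?_
  rcases eq_or_ne i j with rfl | hij
  · rw [le_antisymm (hj u) (hi u)]
    simp only [sub_self, abs_zero, Real.zero_rpow hp.ne', add_zero]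
    positivity
  · exact add_le_sum (f := fun v => |x u - x v| ^ p) (fun v _ => by positivity) (mem_univ i)
      (mem_univ j) hij

lemma exists_max_mul_sum_abs_sub_rpow_le {p : ℝ} (hp : 2 ≤ p) (x : V → ℝ) :
    ∃ c, 2 * max (Fintype.card V : ℝ) (2 ^ (p - 1)) * ∑ u, |x u - c| ^ p ≤
      ∑ u, ∑ v, |x u - x v| ^ p := by
  rcases le_total (2 ^ (p - 1)) (Fintype.card V : ℝ) with h | h
  · rw [max_eq_left h]
    exact exists_card_mul_sum_abs_sub_rpow_le hp x
  · rw [max_eq_right h, ← Real.rpow_one_add' zero_le_two (by linarith), add_sub_cancel]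
    exact exists_two_rpow_mul_sum_abs_sub_rpow_le (by linarith) x

lemma card_mul_sum_sum_eq_le {ι : Type*} [DecidableEq ι] {part : V → ι} {M N : ℕ}
    (hM : ∀ u, #{v | part u = part v} = M) (hN : ∀ u, #{v | part u ≠ part v} = N)
    {d : V → V → ℝ} {C : ℝ} (hd : ∀ u v w, d u v ≤ C * (d u w + d v w)) :
    N * ∑ u, ∑ v with part u = part v, d u v ≤
      2 * C * M * ∑ u, ∑ v with part u ≠ part v, d u v := by
  have hfst : ∑ u, ∑ v with part u = part v, ∑ w with part u ≠ part w, d u w =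
      M * ∑ u, ∑ w with part u ≠ part w, d u w := by
    simp only [sum_const, hM, nsmul_eq_mul, mul_sum]
  have hsnd : ∑ u, ∑ v with part u = part v, ∑ w with part u ≠ part w, d v w =
      M * ∑ u, ∑ w with part u ≠ part w, d u w := by
    rw [← hfst, sum_comm' (t' := univ) (s' := fun v => {u | part v = part u}) (by simp [eq_comm])]
    refine sum_congr rfl fun v _ => sum_congr rfl fun u hu => ?_
    rw [(mem_filter.1 hu).2]
  calc N * ∑ u, ∑ v with part u = part v, d u v
      = ∑ u, ∑ v with part u = part v, ∑ w with part u ≠ part w, d u v := by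
        simp only [sum_const, hN, nsmul_eq_mul, mul_sum]
    _ ≤ ∑ u, ∑ v with part u = part v, ∑ w with part u ≠ part w, C * (d u w + d v w) := by
        gcongr; exact hd _ _ _
    _ = _ := by
        simp only [← mul_sum, sum_add_distrib, hfst, hsnd]
        ring

end DoubleSums

section Multigraph

variable {V E : Type} [Fintype E] [DecidableEq V] {p : ℝ} {ends : E → V × V}

/-- The number of edges joining `u` and `v`. A loop counts twice, as in `graphVal`, so that
valencies are row sums. -/
def edgeMult (ends : E → V × V) (u v : V) : ℕ :=
  ∑ e, ((if ends e = (u, v) then 1 else 0) + if ends e = (v, u) then 1 else 0)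

lemma edgeMult_eq_zero_iff {u v : V} : edgeMult ends u v = 0 ↔ ¬ graphAdj ends u v := by
  simp [edgeMult, graphAdj]

variable [Fintype V]

lemma graphVal_eq_sum_edgeMult (ends : E → V × V) (u : V) :
    graphVal ends u = ∑ v, edgeMult ends u v := by
  simp only [graphVal, edgeMult]
  rw [sum_comm]
  simp [sum_add_distrib, Prod.ext_iff, ite_and]

lemma two_mul_graphEnergy (p : ℝ) (ends : E → V × V) (x : V → ℝ) :
    2 * graphEnergy p ends x = ∑ u, ∑ v, edgeMult ends u v * |x u - x v| ^ p := by
  simp only [graphEnergy, edgeMult, Nat.cast_sum, sum_mul, mul_sum]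
  rw [sum_comm_cycle]
  refine sum_congr rfl fun e _ => ?_
  simp [add_mul, sum_add_distrib, Prod.ext_iff, ite_and, abs_sub_comm (x (ends e).1), two_mul]

lemma graphDenom_le (p : ℝ) (ends : E → V × V) (x : V → ℝ) (c : ℝ) :
    graphDenom p ends x ≤ ∑ u, |x u - c| ^ p * graphVal ends u := by
  refine csInf_le ⟨0, ?_⟩ ⟨c, rfl⟩
  rintro _ ⟨c, rfl⟩
  positivity

lemma le_graphDenom {x : V → ℝ} {b : ℝ} (h : ∀ c, b ≤ ∑ u, |x u - c| ^ p * graphVal ends u) :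
    b ≤ graphDenom p ends x := by
  refine le_csInf ⟨_, 0, rfl⟩ ?_
  rintro _ ⟨c, rfl⟩
  exact h c

lemma graphDenom_nonneg (p : ℝ) (ends : E → V × V) (x : V → ℝ) : 0 ≤ graphDenom p ends x :=
  le_graphDenom fun c => by positivity

lemma graphDenom_pos (hp : 1 ≤ p) (hval : ∀ u, 0 < graphVal ends u) {x : V → ℝ}
    (hx : ∃ u v, x u ≠ x v) : 0 < graphDenom p ends x := by
  obtain ⟨u, v, huv⟩ := hx
  have : 0 < |x u - x v| ^ p := Real.rpow_pos_of_pos (abs_pos.2 (sub_ne_zero.2 huv)) p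
  refine (by positivity : 0 < |x u - x v| ^ p / 2 ^ (p - 1)).trans_le (le_graphDenom fun c => ?_)
  rw [div_le_iff₀' (by positivity)]
  calc |x u - x v| ^ p ≤ 2 ^ (p - 1) * (|x u - c| ^ p + |x v - c| ^ p) := by
        simpa only [sub_sub_sub_cancel_right] using
          abs_sub_rpow_le_two_rpow_mul hp (x u - c) (x v - c)
    _ ≤ 2 ^ (p - 1) * ∑ w, |x w - c| ^ p := by
        gcongr
        exact add_le_sum (f := fun w => |x w - c| ^ p) (fun w _ => by positivity) (mem_univ u)
          (mem_univ v) (ne_of_apply_ne x huv)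
    _ ≤ 2 ^ (p - 1) * ∑ w, |x w - c| ^ p * graphVal ends w := by
        gcongr with w
        exact le_mul_of_one_le_right (by positivity) (mod_cast hval w)

lemma lambda1_le {x : V → ℝ} (hx : ∃ u v, x u ≠ x v) :
    lambda1 p ends ≤ graphEnergy p ends x / graphDenom p ends x := by
  refine csInf_le ⟨0, ?_⟩ ⟨x, hx, rfl⟩
  rintro _ ⟨y, -, rfl⟩
  exact div_nonneg (sum_nonneg fun e _ => by positivity) (graphDenom_nonneg p ends y)

lemma le_lambda1 [Nontrivial V] (hp : 1 ≤ p) (hval : ∀ u, 0 < graphVal ends u) {r : ℝ}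
    (h : ∀ x, r * graphDenom p ends x ≤ graphEnergy p ends x) : r ≤ lambda1 p ends := by
  obtain ⟨u, v, huv⟩ := exists_pair_ne V
  refine le_csInf ⟨_, Pi.single u 1, ⟨u, v, by simp [huv.symm]⟩, rfl⟩ ?_
  rintro _ ⟨x, hx, rfl⟩
  exact (le_div_iff₀ (graphDenom_pos hp hval hx)).2 (h x)

theorem lambda1_le_one_of_not_graphAdj (hp : 1 ≤ p) {i j : V} (hij : i ≠ j)
    (hadj : ¬ graphAdj ends i j) (hval : graphVal ends i = graphVal ends j) :
    lambda1 p ends ≤ 1 := by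
  let x (u : V) : ℝ := if u = i then 1 else if u = j then -1 else 0
  have hxi : x i = 1 := if_pos rfl
  have hxj : x j = -1 := by simp [x, hij.symm]
  have henergy : graphEnergy p ends x ≤ graphVal ends i + graphVal ends j := by
    simp only [graphEnergy, graphVal, Nat.cast_sum, ← sum_add_distrib]
    refine sum_le_sum fun e _ => ?_
    have hadj₁ : (ends e).1 = i → (ends e).2 ≠ j := fun h h' => hadj ⟨e, .inl (Prod.ext h h')⟩
    have hadj₂ : (ends e).1 = j → (ends e).2 ≠ i := fun h h' => hadj ⟨e, .inr (Prod.ext h h')⟩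
    have hp₀ : p ≠ 0 := by linarith
    dsimp only [x]
    split_ifs <;> norm_num [Real.zero_rpow hp₀] <;> grind
  have hdenom : (graphVal ends i + graphVal ends j : ℝ) ≤ graphDenom p ends x := by
    refine le_graphDenom fun c => ?_
    calc (graphVal ends i + graphVal ends j : ℝ)
        ≤ |x i - c| ^ p * graphVal ends i + |x j - c| ^ p * graphVal ends j := by
          have := two_le_abs_one_sub_rpow_add_abs_neg_one_sub_rpow hp c
          rw [hxi, hxj, ← hval, ← add_mul, ← two_mul]
          gcongr
      _ ≤ ∑ u, |x u - c| ^ p * graphVal ends u :=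
          add_le_sum (f := fun u => |x u - c| ^ p * graphVal ends u) (fun u _ => by positivity)
            (mem_univ i) (mem_univ j) hij
  calc lambda1 p ends ≤ graphEnergy p ends x / graphDenom p ends x :=
        lambda1_le ⟨i, j, by rw [hxi, hxj]; norm_num⟩
    _ ≤ 1 := div_le_one_of_le₀ (henergy.trans hdenom) (graphDenom_nonneg p ends x)

end Multigraph

section CompleteEquipartite

variable {V E : Type} [Fintype V] [Fintype E] [DecidableEq V] {ι : Type*} [DecidableEq ι]

/-- The multigraph `ends` is the complete equipartite graph `K_{k×M}` on the parts given by the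
fibres of `part`. Its edges may be listed in any order and orientation. -/
structure IsCompleteEquipartite (k M : ℕ) (ends : E → V × V) (part : V → ι) : Prop where
  card_vertices : Fintype.card V = k * M
  card_part : ∀ u, #{v | part u = part v} = M
  edgeMult_eq : ∀ u v, edgeMult ends u v = if part u = part v then 0 else 1

namespace IsCompleteEquipartite

variable {k M : ℕ} {ends : E → V × V} {part : V → ι} {p : ℝ}

lemma card_part_ne (h : IsCompleteEquipartite k M ends part) (u : V) :
    #{v | part u ≠ part v} = (k - 1) * M := by
  have := card_filter_add_card_filter_not (s := univ) (fun v => part u = part v)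
  rw [h.card_part, card_univ, h.card_vertices] at this
  rw [Nat.sub_one_mul]
  lia

lemma graphVal_eq (h : IsCompleteEquipartite k M ends part) (u : V) :
    graphVal ends u = (k - 1) * M := by
  rw [graphVal_eq_sum_edgeMult, ← h.card_part_ne u, card_filter]
  exact sum_congr rfl fun v _ => by rw [h.edgeMult_eq, ite_not]

lemma two_mul_graphEnergy_eq (h : IsCompleteEquipartite k M ends part) (x : V → ℝ) :
    2 * graphEnergy p ends x = ∑ u, ∑ v with part u ≠ part v, |x u - x v| ^ p := by
  rw [two_mul_graphEnergy]
  simp [h.edgeMult_eq, sum_filter]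

lemma sum_sum_abs_sub_rpow_le_graphEnergy (h : IsCompleteEquipartite k M ends part) (hp : 1 ≤ p)
    (hM : 0 < M) (x : V → ℝ) :
    (k - 1 : ℕ) * ∑ u, ∑ v, |x u - x v| ^ p ≤
      ((k - 1 : ℕ) + 2 ^ p) * (2 * graphEnergy p ends x) := by
  have hd (u v w : V) : |x u - x v| ^ p ≤ 2 ^ (p - 1) * (|x u - x w| ^ p + |x v - x w| ^ p) := by
    simpa only [sub_sub_sub_cancel_right] using
      abs_sub_rpow_le_two_rpow_mul hp (x u - x w) (x v - x w)
  have hsame : (k - 1 : ℕ) * ∑ u, ∑ v with part u = part v, |x u - x v| ^ p ≤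
      2 ^ p * (2 * graphEnergy p ends x) := by
    have := card_mul_sum_sum_eq_le h.card_part h.card_part_ne hd
    rw [← h.two_mul_graphEnergy_eq, ← Real.rpow_one_add' zero_le_two (by linarith),
      add_sub_cancel] at this
    refine le_of_mul_le_mul_right ?_ (Nat.cast_pos.2 hM : (0 : ℝ) < M)
    push_cast at this
    linarith
  have hsplit : ∑ u, ∑ v, |x u - x v| ^ p =
      ∑ u, ∑ v with part u = part v, |x u - x v| ^ p + 2 * graphEnergy p ends x := by
    rw [h.two_mul_graphEnergy_eq, ← sum_add_distrib]
    exact sum_congr rfl fun u _ => (sum_filter_add_sum_filter_not _ _ _).symm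
  rw [hsplit, mul_add, add_mul]
  linarith

theorem lambda1_le_one (h : IsCompleteEquipartite k M ends part) (hp : 1 ≤ p) (hk : 0 < k)
    (hM : 2 ≤ M) : lambda1 p ends ≤ 1 := by
  obtain ⟨i⟩ : Nonempty V := Fintype.card_pos_iff.1 (by rw [h.card_vertices]; positivity)
  obtain ⟨j, hj, hji⟩ := exists_mem_ne (s := {v | part i = part v})
    (by rw [h.card_part]; lia) i
  refine lambda1_le_one_of_not_graphAdj hp hji.symm ?_ (by simp only [h.graphVal_eq])
  rw [← edgeMult_eq_zero_iff, h.edgeMult_eq, if_pos (mem_filter.1 hj).2]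

theorem le_lambda1 (h : IsCompleteEquipartite k M ends part) (hp : 2 ≤ p) (hk : 2 ≤ k)
    (hM : 0 < M) :
    max (k * M : ℝ) (2 ^ (p - 1)) / (M * (k - 1 + 2 ^ p)) ≤ lambda1 p ends := by
  have : Nontrivial V := Fintype.one_lt_card_iff_nontrivial.1 (by rw [h.card_vertices]; nlinarith)
  have hval (u : V) : 0 < graphVal ends u := by
    rw [h.graphVal_eq]
    exact Nat.mul_pos (by lia) hM
  have hk₁ : ((k - 1 : ℕ) : ℝ) = k - 1 := Nat.cast_pred (by lia)
  have hk₀ : (0 : ℝ) ≤ k - 1 := hk₁ ▸ Nat.cast_nonneg _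
  refine _root_.le_lambda1 (one_le_two.trans hp) hval fun x => ?_
  obtain ⟨c, hc⟩ := exists_max_mul_sum_abs_sub_rpow_le hp x
  rw [h.card_vertices, Nat.cast_mul] at hc
  rw [div_mul_eq_mul_div, div_le_iff₀ (by positivity)]
  refine le_of_mul_le_mul_left ?_ (zero_lt_two (α := ℝ))
  calc 2 * (max (k * M : ℝ) (2 ^ (p - 1)) * graphDenom p ends x)
      ≤ 2 * (max (k * M : ℝ) (2 ^ (p - 1)) * ∑ u, |x u - c| ^ p * graphVal ends u) := by
        gcongr
        exact graphDenom_le p ends x c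
    _ = M * ((k - 1) *
          (2 * max (k * M : ℝ) (2 ^ (p - 1)) * ∑ u, |x u - c| ^ p)) := by
        simp only [h.graphVal_eq, ← sum_mul, Nat.cast_mul, hk₁]
        ring
    _ ≤ M * ((k - 1) * ∑ u, ∑ v, |x u - x v| ^ p) := by gcongr
    _ ≤ M * ((k - 1 + 2 ^ p) * (2 * graphEnergy p ends x)) := by
        refine mul_le_mul_of_nonneg_left ?_ M.cast_nonneg
        simpa only [hk₁] using h.sum_sum_abs_sub_rpow_le_graphEnergy (one_le_two.trans hp) hM x
    _ = 2 * (graphEnergy p ends x * (M * (k - 1 + 2 ^ p))) := by ring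

end IsCompleteEquipartite

end CompleteEquipartite

lemma edgeMult_subtype_lt_and_ne {V : Type} {ι : Type*} [Fintype V] [LinearOrder V]
    [DecidableEq ι] (part : V → ι) (u v : V) :
    edgeMult (fun e : {e : V × V // e.1 < e.2 ∧ part e.1 ≠ part e.2} => e.val) u v =
      if part u = part v then 0 else 1 := by
  have hsum (w : V × V) :
      ∑ e : {e : V × V // e.1 < e.2 ∧ part e.1 ≠ part e.2}, (if e.val = w then 1 else 0) =
        if w.1 < w.2 ∧ part w.1 ≠ part w.2 then 1 else 0 := by
    rw [← sum_subtype {e : V × V | e.1 < e.2 ∧ part e.1 ≠ part e.2} (by simp)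
      fun e => if e = w then 1 else 0]
    simp
  rw [edgeMult, sum_add_distrib, hsum, hsum]
  rcases lt_trichotomy u v with h | rfl | h
  · simp [h, h.not_gt]
  · simp
  · simp [h, h.not_gt, eq_comm (a := part u)]

lemma card_filter_div_eq {k M : ℕ} (u : Fin (k * M)) :
    #{v : Fin (k * M) | (u : ℕ) / M = v / M} = M := calc
  #{v : Fin (k * M) | (u : ℕ) / M = v / M} = #({u.divNat} ×ˢ (univ : Finset (Fin M))) :=
    card_equiv finProdFinEquiv.symm fun v => by
      simp only [mem_filter_univ, mem_product, mem_singleton, mem_univ, and_true, Fin.ext_iff,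
        finProdFinEquiv_symm_apply, Fin.coe_divNat, eq_comm]
  _ = M := by simp

lemma isCompleteEquipartite_fin (k M : ℕ) :
    IsCompleteEquipartite k M (fun e : {e : Fin (k * M) × Fin (k * M) //
        e.1 < e.2 ∧ (e.1 : ℕ) / M ≠ (e.2 : ℕ) / M} => e.val) (fun u => (u : ℕ) / M) where
  card_vertices := Fintype.card_fin _
  card_part := card_filter_div_eq
  edgeMult_eq := edgeMult_subtype_lt_and_ne fun u : Fin (k * M) => (u : ℕ) / M

lemma mul_div_le_max_div {k M p : ℝ} (hk : 1 ≤ k) (hM : 1 ≤ M) :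
    (k * M - 2 + 2 ^ (p - 1)) * k / (k * M * (k - 1 + 2 ^ (p + 2))) ≤
      max (k * M) (2 ^ (p - 1)) / (M * (k - 1 + 2 ^ p)) := by
  have hp : (2 : ℝ) ^ p = 2 * 2 ^ (p - 1) := by
    rw [Real.rpow_sub_one two_ne_zero]
    ring
  have hp₂ : (2 : ℝ) ^ (p + 2) = 8 * 2 ^ (p - 1) := by
    rw [Real.rpow_add two_pos, Real.rpow_two, hp]
    ring
  have : 0 ≤ k - 1 := sub_nonneg.2 hk
  have hkM : 0 ≤ k * M - k := sub_nonneg.2 (le_mul_of_one_le_right (by positivity) hM)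
  rw [hp, hp₂, mul_assoc k M, mul_comm _ k, mul_div_mul_left _ _ (by positivity),
    div_le_div_iff₀ (by positivity) (by positivity), mul_left_comm, mul_left_comm (max _ _)]
  refine mul_le_mul_of_nonneg_left ?_ (by positivity)
  have hQ : (0 : ℝ) < 2 ^ (p - 1) := by positivity
  generalize (2 : ℝ) ^ (p - 1) = Q at hQ ⊢
  rcases le_total Q (k * M) with h | h
  · rw [max_eq_left h]
    nlinarith [mul_nonneg hQ.le (sub_nonneg.2 h), mul_nonneg hQ.le hkM]
  · rw [max_eq_right h]
    nlinarith [mul_nonneg hQ.le (sub_nonneg.2 h), mul_nonneg hQ.le hkM,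
      mul_nonneg (sub_nonneg.2 h) (by positivity : 0 ≤ k - 1 + 2 * Q)]

theorem stmt6_general {V E : Type} {ι : Type*} [Fintype V] [Fintype E] [DecidableEq V]
    [DecidableEq ι] {k M : ℕ} {ends : E → V × V} {part : V → ι}
    (h : IsCompleteEquipartite k M ends part) (hk : 2 ≤ k) (hM : 2 ≤ M) {p : ℝ} (hp : 2 ≤ p) :
    lambda1 p ends ≤ 1 ∧
      max (k * M : ℝ) (2 ^ (p - 1)) / (M * (k - 1 + 2 ^ p)) ≤ lambda1 p ends :=
  ⟨h.lambda1_le_one (one_le_two.trans hp) (by lia) hM, h.le_lambda1 hp hk (by lia)⟩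

/-- For p > 2 and k, M ≥ 2, the complete k-partite graph K_{k×M} (vertices
Fin (k*M), parts given by division by M) satisfies
1 ≥ λ_{1,p}(K_{k×M}) ≥ (m - 2 + 2^{p-1})·k / (m·(k - 1 + 2^{p+2})) with m = kM. -/
theorem stmt6 (k M : ℕ) (hk : 2 ≤ k) (hM : 2 ≤ M) (p : ℝ) (hp : 2 < p) :
    1 ≥ lambda1 p (fun e : {e : Fin (k * M) × Fin (k * M) //
        e.1 < e.2 ∧ (e.1 : ℕ) / M ≠ (e.2 : ℕ) / M} => e.val) ∧
    lambda1 p (fun e : {e : Fin (k * M) × Fin (k * M) //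
        e.1 < e.2 ∧ (e.1 : ℕ) / M ≠ (e.2 : ℕ) / M} => e.val) ≥
      (((k * M : ℕ) : ℝ) - 2 + 2 ^ (p - 1)) * k /
        (((k * M : ℕ) : ℝ) * ((k : ℝ) - 1 + 2 ^ (p + 2))) := by
  obtain ⟨hle, hge⟩ := stmt6_general (isCompleteEquipartite_fin k M) hk hM hp.le
  rw [Nat.cast_mul]
  exact ⟨hle, (mul_div_le_max_div (by norm_cast; lia) (by norm_cast; lia)).trans hge⟩
end
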